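/- Let T be a tree of diameter 3, consisting of two adjacent nodes r and r' such that every other node is a leaf adjacent to r or to r'; root T at r, and assume every node has positive weight. Then in any optimal search tree D for (T, w), the root of D is assigned either to r', or to a leaf child of r of maximum weight among the leaf children of r, or to a leaf child of r' of maximum weight among the leaf children of r'. -/

import Mathlib

/-!
The proof is an exchange argument. Let `D` be an optimal search tree.

* If the root of `D` is assigned `r`, its left subtree is empty because every node descends from
  `r`; deleting the root gives a search tree whose cost is smaller by the total weight, which is
  positive.
* If the root of `D` is assigned a leaf `x` of `T`, its right subtree can only contain `x`, and may
  be taken to be a single leaf. Suppose a sibling `x'` of `x` is heavier. Exchanging the labels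
  `x` and `x'` throughout `D` is an automorphism of `T`, so it yields another search tree. The leaf
  `x` sits at depth 1, while `x'` sits at depth at least 2 since the left subtree also has to
  contain `r` and `r'`; hence the exchange strictly lowers the cost (`exchange`), a contradiction.

Costs are compared through the recursion `BT.cost_node`: the cost of an inner node is the sum of the
costs of its two subtrees plus their total weights.
-/

open scoped Classical

/-- Ordered binary trees, every node carrying a label (assignment). `nil` is the empty tree. -/
inductive BT (α : Type) where
  | nil : BT α
  | node (a : α) (l r : BT α) : BT α
  deriving DecidableEq

namespace BT

variable {α : Type}

/-- Labels of the leaves (nodes with no children), from left to right. -/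
def leafList : BT α → List α
  | .nil => []
  | .node a .nil .nil => [a]
  | .node _ l r => l.leafList ++ r.leafList

/-- Labels of all nodes. -/
def vals : BT α → List α
  | .nil => []
  | .node a l r => a :: (l.vals ++ r.vals)

/-- Leaf labels together with the depth (number of edges from the root) of the leaf. -/
def leafDepths : BT α → List (α × ℕ)
  | .nil => []
  | .node a .nil .nil => [(a, 0)]
  | .node _ l r => (l.leafDepths ++ r.leafDepths).map (fun p => (p.1, p.2 + 1))

/-- Height of a binary tree, in edges. -/
def height : BT α → ℕ
  | .nil => 0
  | .node _ .nil .nil => 0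
  | .node _ l r => max l.height r.height + 1

/-- Label of the root. -/
def rootVal : BT α → Option α
  | .nil => none
  | .node a _ _ => some a

/-- The labels of the nodes on the path from the root to the (leftmost) leaf labelled `x`. -/
def pathTo [DecidableEq α] : BT α → α → List α
  | .nil, _ => []
  | .node a l r, x => a :: (if x ∈ r.leafList then r.pathTo x else l.pathTo x)

/-- The depth (number of edges) of the leaf labelled `x`. -/
def depthOf [DecidableEq α] (D : BT α) (x : α) : ℕ := (D.pathTo x).length - 1

/-- The search-tree property w.r.t. a descendance relation `desc` (`desc u v` meaning
`v` lies in the subtree of the input tree rooted at `u`): everything in the right subtree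
of a node labelled `a` is in the subtree of `a`, everything in the left subtree is not. -/
def SearchProp (desc : α → α → Prop) : BT α → Prop
  | .nil => True
  | .node a l r =>
      (∀ b ∈ r.vals, desc a b) ∧ (∀ b ∈ l.vals, ¬ desc a b) ∧
        SearchProp desc l ∧ SearchProp desc r

/-- Cost (expected number of queries, unnormalized) of a search tree. -/
def cost (w : α → ℕ) (D : BT α) : ℕ := (D.leafDepths.map (fun p => p.2 * w p.1)).sum

/-- Total weight of the leaves of a search (sub)tree. -/
def leafWeight (w : α → ℕ) (D : BT α) : ℕ := (D.leafList.map w).sum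

/-- All subtrees of a binary tree together with their depth. -/
def subtreesD : BT α → List (BT α × ℕ)
  | .nil => []
  | .node a l r =>
      (BT.node a l r, 0) :: (l.subtreesD ++ r.subtreesD).map (fun p => (p.1, p.2 + 1))

end BT

/-- A finite rooted tree, encoded by a parent function on `Fin n`. -/
structure RTree where
  n : ℕ
  parent : Fin n → Fin n
  root : Fin n
  parent_root : parent root = root
  reach : ∀ v, ∃ k, parent^[k] v = root

namespace RTree

variable (T : RTree)

/-- `T.anc u v` holds iff `u` is a (weak) ancestor of `v`, i.e. `v ∈ T_u`. -/
def anc (u v : Fin T.n) : Prop := ∃ k, T.parent^[k] v = u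

/-- The set of nodes of the subtree `T_u` rooted at `u`. -/
noncomputable def subtree (u : Fin T.n) : Finset (Fin T.n) :=
  Finset.univ.filter (fun v => T.anc u v)

/-- Total weight of a set of nodes. -/
def wsum (w : Fin T.n → ℕ) (S : Finset (Fin T.n)) : ℕ := ∑ v ∈ S, w v

/-- `D` is a search tree for the entire tree `T`. -/
def IsSearchTree (D : BT (Fin T.n)) : Prop :=
  (∀ v : Fin T.n, D.leafList.count v = 1) ∧ BT.SearchProp T.anc D

/-- `D` is a search tree for the subtree (or subforest) of `T` induced by the node set `V'`. -/
def IsSearchTreeOn (V' : Finset (Fin T.n)) (D : BT (Fin T.n)) : Prop :=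
  (∀ v : Fin T.n, D.leafList.count v = (if v ∈ V' then 1 else 0)) ∧
    (∀ a ∈ D.vals, a ∈ V') ∧ BT.SearchProp T.anc D

/-- `D` is an optimal (minimum expected cost) search tree for `(T,w)`. -/
def IsOptimal (w : Fin T.n → ℕ) (D : BT (Fin T.n)) : Prop :=
  T.IsSearchTree D ∧ ∀ D' : BT (Fin T.n), T.IsSearchTree D' → BT.cost w D ≤ BT.cost w D'

/-- Degree of a node of `T` (number of neighbours). -/
noncomputable def degree (v : Fin T.n) : ℕ :=
  (Finset.univ.filter (fun u => T.parent u = v ∧ u ≠ v)).card + (if v = T.root then 0 else 1)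

/-- Maximum degree `Δ(T)`. -/
noncomputable def maxDegree : ℕ := Finset.univ.sup T.degree

/-- `y` lies on the (unique) path between `u` and `v` in `T`. -/
def onPath (y u v : Fin T.n) : Prop :=
  (T.anc y u ∨ T.anc y v) ∧ (∀ z, T.anc z u → T.anc z v → T.anc z y)

end RTree


/-- The nodes of a tree of diameter 3: the root `r`, its neighbour `r'`, `a` leaves
attached to `r` and `b` leaves attached to `r'`. -/
inductive D3 (a b : ℕ) where
  | rr : D3 a b
  | rp : D3 a b
  | lr (i : Fin a) : D3 a b
  | lp (i : Fin b) : D3 a b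
  deriving DecidableEq

/-- Ancestor relation of the diameter-3 tree rooted at `r = rr`. -/
def d3anc {a b : ℕ} : D3 a b → D3 a b → Prop
  | .rr, _ => True
  | .rp, y => y = D3.rp ∨ ∃ i, y = D3.lp i
  | x, y => x = y

/-- Search trees for the diameter-3 tree. -/
def IsD3SearchTree {a b : ℕ} (D : BT (D3 a b)) : Prop :=
  (∀ v : D3 a b, D.leafList.count v = 1) ∧ BT.SearchProp d3anc D

/-! ### Costs and relabellings of binary trees -/

namespace BT

variable {α β : Type}

/-- Relabelling of a binary tree. -/
def map (f : α → β) : BT α → BT β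
  | .nil => .nil
  | .node a l r => .node (f a) (l.map f) (r.map f)

lemma leafList_node (a : α) (l r : BT α) (h : ¬ (l = .nil ∧ r = .nil)) :
    (BT.node a l r).leafList = l.leafList ++ r.leafList := by
  cases l <;> cases r <;> simp_all [leafList]

lemma leafDepths_node (a : α) (l r : BT α) (h : ¬ (l = .nil ∧ r = .nil)) :
    (BT.node a l r).leafDepths =
      (l.leafDepths ++ r.leafDepths).map (fun p => (p.1, p.2 + 1)) := by
  cases l <;> cases r <;> simp_all [leafDepths]

lemma map_fst_leafDepths (D : BT α) : D.leafDepths.map Prod.fst = D.leafList := by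
  induction D with
  | nil => rfl
  | node a l r ihl ihr =>
    by_cases h : l = .nil ∧ r = .nil
    · obtain ⟨rfl, rfl⟩ := h; rfl
    · rw [leafList_node _ _ _ h, leafDepths_node _ _ _ h, ← ihl, ← ihr]
      simp [Function.comp_def]

lemma sum_shift (w : α → ℕ) (L : List (α × ℕ)) :
    ((L.map (fun p => (p.1, p.2 + 1))).map (fun p => p.2 * w p.1)).sum =
      (L.map (fun p => p.2 * w p.1)).sum + ((L.map Prod.fst).map w).sum := by
  induction L with
  | nil => rfl
  | cons p L ih => simp only [List.map_cons, List.sum_cons, ih]; ring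

/-- Every leaf below an inner node is one edge deeper than in its subtree. -/
lemma cost_node (w : α → ℕ) (a : α) (l r : BT α) (h : ¬ (l = .nil ∧ r = .nil)) :
    cost w (.node a l r) = cost w l + cost w r + (leafWeight w l + leafWeight w r) := by
  unfold cost leafWeight
  rw [leafDepths_node _ _ _ h, sum_shift, ← map_fst_leafDepths, ← map_fst_leafDepths]
  simp

lemma leafList_subset_vals (D : BT α) : ∀ x ∈ D.leafList, x ∈ D.vals := by
  induction D with
  | nil => simp [leafList]
  | node a l r ihl ihr =>
    by_cases h : l = .nil ∧ r = .nil
    · obtain ⟨rfl, rfl⟩ := h; simp [leafList, vals]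
    · rw [leafList_node _ _ _ h]
      intro x hx
      simp only [vals, List.mem_cons, List.mem_append] at hx ⊢
      exact .inr (hx.imp (ihl x) (ihr x))

lemma map_eq_nil (f : α → β) (D : BT α) : D.map f = .nil ↔ D = .nil := by
  cases D <;> simp [map]

lemma leafList_map (f : α → β) (D : BT α) : (D.map f).leafList = D.leafList.map f := by
  induction D with
  | nil => rfl
  | node a l r ihl ihr =>
    by_cases h : l = .nil ∧ r = .nil
    · obtain ⟨rfl, rfl⟩ := h; rfl
    · rw [map, leafList_node _ _ _ h, leafList_node _ _ _ (by simpa [map_eq_nil] using h), ihl, ihr,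
        List.map_append]

lemma vals_map (f : α → β) (D : BT α) : (D.map f).vals = D.vals.map f := by
  induction D with
  | nil => rfl
  | node a l r ihl ihr => simp [map, vals, ihl, ihr]

lemma cost_map (f : α → β) (w : β → ℕ) (D : BT α) : cost w (D.map f) = cost (w ∘ f) D := by
  induction D with
  | nil => rfl
  | node a l r ihl ihr =>
    by_cases h : l = .nil ∧ r = .nil
    · obtain ⟨rfl, rfl⟩ := h; simp [map, cost, leafDepths]
    · rw [map, cost_node _ _ _ _ h, cost_node _ _ _ _ (by simpa [map_eq_nil] using h), ihl, ihr]
      simp [leafWeight, leafList_map]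

lemma searchProp_map (f : α → β) (p : α → α → Prop) (q : β → β → Prop)
    (hf : ∀ u v, q (f u) (f v) ↔ p u v) (D : BT α) (hD : SearchProp p D) :
    SearchProp q (D.map f) := by
  induction D with
  | nil => trivial
  | node a l r ihl ihr =>
    obtain ⟨h1, h2, h3, h4⟩ := hD
    refine ⟨?_, ?_, ihl h3, ihr h4⟩ <;> simp only [vals_map, List.mem_map] <;>
      rintro _ ⟨b, hb, rfl⟩ <;> rw [hf]
    · exact h1 b hb
    · exact h2 b hb

lemma leafWeight_mono (w w' : α → ℕ) (D : BT α) (h : ∀ x ∈ D.leafList, w' x ≤ w x) :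
    leafWeight w' D ≤ leafWeight w D :=
  List.sum_le_sum h

lemma cost_mono (w w' : α → ℕ) (D : BT α) (h : ∀ x ∈ D.leafList, w' x ≤ w x) :
    cost w' D ≤ cost w D := by
  induction D with
  | nil => exact le_rfl
  | node a l r ihl ihr =>
    by_cases hn : l = .nil ∧ r = .nil
    · obtain ⟨rfl, rfl⟩ := hn; simp [cost, leafDepths]
    · rw [leafList_node _ _ _ hn] at h
      have hl : ∀ x ∈ l.leafList, w' x ≤ w x := fun x hx => h x (by simp [hx])
      have hr : ∀ x ∈ r.leafList, w' x ≤ w x := fun x hx => h x (by simp [hx])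
      have := ihl hl
      have := ihr hr
      have := leafWeight_mono w w' l hl
      have := leafWeight_mono w w' r hr
      rw [cost_node _ _ _ _ hn, cost_node _ _ _ _ hn]
      omega

/-- If a tree has two distinct leaf labels, all its leaves have positive depth, so lowering the
weight of any leaf strictly lowers the cost. -/
lemma cost_strict_mono (w w' : α → ℕ) (D : BT α) (h : ∀ x ∈ D.leafList, w' x ≤ w x)
    {y z x : α} (hy : y ∈ D.leafList) (hz : z ∈ D.leafList) (hyz : y ≠ z)
    (hx : x ∈ D.leafList) (hlt : w' x < w x) : cost w' D < cost w D := by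
  cases D with
  | nil => simp [leafList] at hy
  | node a l r =>
    by_cases hn : l = .nil ∧ r = .nil
    · obtain ⟨rfl, rfl⟩ := hn
      simp only [leafList, List.mem_singleton] at hy hz
      exact absurd (hy.trans hz.symm) hyz
    · have hs : ((l.leafList ++ r.leafList).map w').sum <
          ((l.leafList ++ r.leafList).map w).sum := by
        rw [leafList_node _ _ _ hn] at h hx
        exact List.sum_lt_sum _ _ h ⟨x, hx, hlt⟩
      rw [leafList_node _ _ _ hn] at h
      have h1 := cost_mono w w' l (fun x hx => h x (by simp [hx]))
      have h2 := cost_mono w w' r (fun x hx => h x (by simp [hx]))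
      rw [cost_node _ _ _ _ hn, cost_node _ _ _ _ hn]
      simp only [List.map_append, List.sum_append] at hs
      unfold leafWeight
      omega

end BT

open BT

/-! ### Automorphisms of the diameter-3 tree -/

lemma d3anc_iff {a b : ℕ} (u v : D3 a b) :
    d3anc u v ↔ u = .rr ∨ u = v ∨ (u = .rp ∧ ∃ i, v = .lp i) := by
  cases u <;> simp [d3anc, eq_comm]

/-- A permutation of the nodes that fixes `r` and `r'` and preserves the set of leaf children of
`r'` is an automorphism of the rooted tree. -/
lemma d3anc_perm {a b : ℕ} (σ : Equiv.Perm (D3 a b)) (h1 : σ .rr = .rr) (h2 : σ .rp = .rp)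
    (h3 : ∀ v, (∃ i, σ v = .lp i) ↔ ∃ i, v = .lp i) (u v : D3 a b) :
    d3anc (σ u) (σ v) ↔ d3anc u v := by
  have e1 : σ u = .rr ↔ u = .rr := by rw [← h1, σ.injective.eq_iff, h1]
  have e2 : σ u = .rp ↔ u = .rp := by rw [← h2, σ.injective.eq_iff, h2]
  rw [d3anc_iff, d3anc_iff, e1, e2, σ.injective.eq_iff, h3]

lemma d3anc_swap_lr {a b : ℕ} (i i' : Fin a) (u v : D3 a b) :
    d3anc (Equiv.swap (D3.lr i) (.lr i') u) (Equiv.swap (D3.lr i) (.lr i') v) ↔ d3anc u v := by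
  refine d3anc_perm _ ?_ ?_ ?_ u v
  · simp [Equiv.swap_apply_def]
  · simp [Equiv.swap_apply_def]
  · intro v; rw [Equiv.swap_apply_def]; split_ifs <;> simp_all

lemma d3anc_swap_lp {a b : ℕ} (i i' : Fin b) (u v : D3 a b) :
    d3anc (Equiv.swap (D3.lp i) (.lp i') u) (Equiv.swap (D3.lp i) (.lp i') v) ↔ d3anc u v := by
  refine d3anc_perm _ ?_ ?_ ?_ u v
  · simp [Equiv.swap_apply_def]
  · simp [Equiv.swap_apply_def]
  · intro v; rw [Equiv.swap_apply_def]; split_ifs <;> simp_all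

/-! ### The exchange argument -/

/-- The root of a search tree has a child, since the tree has at least two leaves. -/
lemma not_both_nil {a b : ℕ} {x : D3 a b} {l r : BT (D3 a b)}
    (hST : IsD3SearchTree (.node x l r)) : ¬ (l = .nil ∧ r = .nil) := by
  rintro ⟨rfl, rfl⟩
  have h1 : D3.rr ∈ (BT.node x .nil .nil).leafList :=
    List.count_pos_iff.1 (by rw [hST.1]; exact one_pos)
  have h2 : D3.rp ∈ (BT.node x .nil .nil).leafList :=
    List.count_pos_iff.1 (by rw [hST.1]; exact one_pos)
  simp only [leafList, List.mem_singleton] at h1 h2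
  exact absurd (h1.trans h2.symm) (by simp)

/-- If the root is assigned a leaf `x` of the input tree that is lighter than `x'`, and exchanging
`x` and `x'` is an automorphism, then the search tree can be improved. -/
lemma exchange {a b : ℕ} (w : D3 a b → ℕ) (x x' : D3 a b) (l r : BT (D3 a b))
    (hST : IsD3SearchTree (.node x l r)) (hx : ∀ y, d3anc x y ↔ x = y)
    (hxr : x ≠ .rr) (hxp : x ≠ .rp)
    (hσ : ∀ u v, d3anc (Equiv.swap x x' u) (Equiv.swap x x' v) ↔ d3anc u v)
    (hlt : w x < w x') :
    ∃ D', IsD3SearchTree D' ∧ cost w D' < cost w (.node x l r) := by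
  have hn := not_both_nil hST
  obtain ⟨hcount, hr, hl, hsl, -⟩ := hST
  rw [leafList_node _ _ _ hn] at hcount
  have hxl : x ∉ l.leafList := fun h => hl x (leafList_subset_vals l x h) ((hx x).2 rfl)
  have hrx : ∀ y ∈ r.leafList, y = x :=
    fun y hy => ((hx y).1 (hr y (leafList_subset_vals r y hy))).symm
  have hrl : r.leafList = [x] := by
    have h1 := List.eq_replicate_of_mem hrx
    have h2 := hcount x
    rw [List.count_append, List.count_eq_zero_of_not_mem hxl, h1, List.count_replicate_self] at h2
    rw [h1, show r.leafList.length = 1 by omega]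
    rfl
  rw [hrl] at hcount
  have hmem : ∀ y, y ≠ x → y ∈ l.leafList := by
    intro y hy
    have h : y ∈ l.leafList ++ [x] := List.count_pos_iff.1 (by rw [hcount]; exact one_pos)
    simpa [hy] using h
  -- the given search tree with its right subtree collapsed to the single leaf `x`
  set E : BT (D3 a b) := .node x l (.node x .nil .nil) with hE
  have hEn : ¬ (l = .nil ∧ BT.node x .nil .nil = .nil) := by simp
  have hEl : E.leafList = l.leafList ++ [x] := by rw [hE, leafList_node _ _ _ hEn]; rfl
  have hcm : ∀ v, ((l.leafList ++ [x]).map (Equiv.swap x x')).count v = 1 := by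
    intro v
    obtain ⟨u, rfl⟩ := (Equiv.swap x x').surjective v
    rw [List.count_map_of_injective _ _ (Equiv.swap x x').injective, hcount]
  refine ⟨E.map (Equiv.swap x x'), ⟨?_, ?_⟩, ?_⟩
  · intro v; rw [leafList_map, hEl]; exact hcm v
  · refine searchProp_map _ d3anc d3anc hσ _ ⟨?_, hl, hsl, ?_⟩
    · simpa [vals] using (hx x).2 rfl
    · simp [SearchProp, vals]
  · rw [cost_map, hE, cost_node _ _ _ _ hEn, cost_node _ _ _ _ hn]
    -- the exchange leaves the total weight unchanged, as it only permutes the leaves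
    have hperm : ((l.leafList ++ [x]).map (Equiv.swap x x')).Perm (l.leafList ++ [x]) :=
      List.perm_iff_count.2 fun v => by rw [hcm, hcount]
    have hsum := (hperm.map w).sum_eq
    have hle : ∀ y ∈ l.leafList, (w ∘ Equiv.swap x x') y ≤ w y := by
      intro y hy
      have hyx : y ≠ x := fun h => hxl (h ▸ hy)
      rw [Function.comp_apply, Equiv.swap_apply_def, if_neg hyx]
      split_ifs with h
      · rw [h]; exact hlt.le
      · exact le_rfl
    have hx' : x' ≠ x := fun h => by rw [h] at hlt; exact lt_irrefl _ hlt
    have hc : cost (w ∘ Equiv.swap x x') l < cost w l :=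
      cost_strict_mono w _ l hle (hmem _ hxr.symm) (hmem _ hxp.symm) (by simp) (hmem _ hx')
        (by simpa using hlt)
    have h0 : cost (w ∘ Equiv.swap x x') (.node x .nil .nil) = 0 := by simp [cost, leafDepths]
    have hr1 : leafWeight w r = w x := by simp [leafWeight, hrl]
    have hr2 : leafWeight (w ∘ Equiv.swap x x') (.node x .nil .nil) = w (Equiv.swap x x' x) := by
      simp [leafWeight, leafList]
    simp only [List.map_append, List.map_map, List.sum_append, List.map_cons, List.map_nil,
      List.sum_singleton] at hsum
    rw [h0, hr1, hr2]
    unfold leafWeight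
    simp only [Function.comp_apply] at *
    omega

/-- Let `T` be a tree of diameter 3, consisting of adjacent nodes `r, r'` with every other
node a leaf adjacent to `r` or to `r'`; root `T` at `r` and assume positive weights.
Then the root of any optimal search tree `D` for `(T,w)` is assigned either to `r'`,
or to a maximum-weight leaf child of `r`, or to a maximum-weight leaf child of `r'`. -/
theorem statement17 (a b : ℕ) (ha : 1 ≤ a) (hb : 1 ≤ b)
    (w : D3 a b → ℕ) (hw : ∀ v, 0 < w v)
    (D : BT (D3 a b)) (hST : IsD3SearchTree D)
    (hopt : ∀ D' : BT (D3 a b), IsD3SearchTree D' → BT.cost w D ≤ BT.cost w D') :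
    D.rootVal = some D3.rp ∨
      (∃ i : Fin a, D.rootVal = some (D3.lr i) ∧ ∀ i' : Fin a, w (D3.lr i') ≤ w (D3.lr i)) ∨
      (∃ i : Fin b, D.rootVal = some (D3.lp i) ∧ ∀ i' : Fin b, w (D3.lp i') ≤ w (D3.lp i)) := by
  cases D with
  | nil => simpa [leafList] using hST.1 .rr
  | node x l r =>
    cases x with
    | rr =>
      exfalso
      have hn := not_both_nil hST
      obtain ⟨hcount, -, hl, -, hsr⟩ := hST
      have hln : l = .nil := by
        cases l with
        | nil => rfl
        | node y _ _ => exact absurd trivial (hl y (by simp [vals]))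
      subst hln
      rw [leafList_node _ _ _ hn] at hcount
      have hle := hopt r ⟨hcount, hsr⟩
      rw [cost_node _ _ _ _ hn] at hle
      have hmem : D3.rr ∈ r.leafList := List.count_pos_iff.1 (by
        have := hcount D3.rr
        simp only [leafList, List.nil_append] at this
        omega)
      have hpos : w .rr ≤ leafWeight w r := List.single_le_sum (by simp) _ (List.mem_map_of_mem hmem)
      have := hw .rr
      omega
    | rp => exact .inl rfl
    | lr i =>
      refine .inr (.inl ⟨i, rfl, fun i' => ?_⟩)
      by_contra! hlt
      obtain ⟨D', h1, h2⟩ := exchange w _ (.lr i') l r hST (fun _ => Iff.rfl) (by simp) (by simp)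
        (d3anc_swap_lr i i') hlt
      exact absurd (hopt D' h1) (not_le.2 h2)
    | lp i =>
      refine .inr (.inr ⟨i, rfl, fun i' => ?_⟩)
      by_contra! hlt
      obtain ⟨D', h1, h2⟩ := exchange w _ (.lp i') l r hST (fun _ => Iff.rfl) (by simp) (by simp)
        (d3anc_swap_lp i i') hlt
      exact absurd (hopt D' h1) (not_le.2 h2)
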